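/- Let K ⊂ ℝ³ be compact and δ > 0 be such that for every point (r₀, z) ∈ K one has η(q) = 1 for all q ∈ ℝ² with |q − r₀| ≤ 2δ. Then for every c₀ > 0 and every n ∈ ℕ there is a constant C = C(n, c₀, K, η) such that the z-derivative of p_k satisfies |∂p_k/∂z (r) + 2π sin(kz)| ≤ C (Re k)^{−n} for all r = (r₀, z) ∈ K and all k ∈ ℂ with Re k ≥ 1 and |Im k| ≤ c₀. -/

import Mathlib

open MeasureTheory Real Classical
open scoped RealInnerProductSpace

noncomputable section

abbrev E2 := EuclideanSpace ℝ (Fin 2)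
abbrev E3 := EuclideanSpace ℝ (Fin 3)

/-- The kernel `S_k(v) = sin(k|v|)/|v|`, with the removable singularity at `0` filled
in by the value `k`. -/
def Skern (k : ℂ) (v : E3) : ℂ :=
  if v = 0 then k else Complex.sin (k * ‖v‖) / (‖v‖ : ℂ)

/-- The embedding `q ↦ (q, 0)` of `ℝ²` into `ℝ³`. -/
def emb2 (q : E2) : E3 := (WithLp.equiv 2 (Fin 3 → ℝ)).symm ![q 0, q 1, 0]

/-- `p_k(r) = ∫_{ℝ²} η(q) S_k(r - (q,0)) dq`. -/
def pfun (η : E2 → ℝ) (k : ℂ) (r : E3) : ℂ :=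
  ∫ q : E2, (η q : ℂ) * Skern k (r - emb2 q)

/-- The projection of an `ℝ³` point onto its first two coordinates. -/
def proj32 (r : E3) : E2 := (WithLp.equiv 2 (Fin 2 → ℝ)).symm ![r 0, r 1]

/-- The partial derivative `∂p_k/∂z`, i.e. the derivative of `p_k` in the direction of the
third coordinate vector. -/
def pz (η : E2 → ℝ) (k : ℂ) (r : E3) : ℂ :=
  fderiv ℝ (pfun η k) r (EuclideanSpace.single 2 (1 : ℝ))

/-- The entire function `G` with `sin w = w * G (w ^ 2)`. -/
def Gfun (s : ℂ) : ℂ := ∑' n : ℕ, (-1) ^ n * s ^ n / ((2 * n + 1).factorial : ℂ)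

lemma Gfun_diff : Differentiable ℂ Gfun := by
  intro s
  have hU : IsOpen (Metric.ball (0 : ℂ) (‖s‖ + 1)) := Metric.isOpen_ball
  have h := Complex.differentiableOn_tsum_of_summable_norm
    (F := fun (n : ℕ) (s : ℂ) => (-1) ^ n * s ^ n / ((2 * n + 1).factorial : ℂ))
    (u := fun n : ℕ => (‖s‖ + 1) ^ n / (n.factorial : ℝ))
    (Real.summable_pow_div_factorial _) (U := Metric.ball (0 : ℂ) (‖s‖ + 1))
    (fun i => by fun_prop) hU (fun i w hw => by
      have hw' : ‖w‖ ≤ ‖s‖ + 1 := by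
        have := mem_ball_zero_iff.1 hw
        exact this.le
      rw [norm_div, norm_mul, norm_pow, norm_pow, norm_neg, norm_one, one_pow, one_mul,
        Complex.norm_natCast]
      have h1 : (i.factorial : ℝ) ≤ ((2 * i + 1).factorial : ℝ) := by
        exact_mod_cast Nat.factorial_le (by omega)
      have h2 : (0 : ℝ) < (i.factorial : ℝ) := by exact_mod_cast Nat.factorial_pos i
      gcongr)
  exact (h s (by simp)).differentiableAt (hU.mem_nhds (by simp))

lemma sin_eq_Gfun (w : ℂ) : Complex.sin w = w * Gfun (w ^ 2) := by
  rw [← (Complex.hasSum_sin w).tsum_eq, Gfun, ← tsum_mul_left]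
  congr 1
  ext n
  rw [← pow_mul]
  ring

lemma Gfun_zero : Gfun 0 = 1 := by
  rw [Gfun, tsum_eq_single 0]
  · simp
  · intro n hn
    simp [hn]

/-- `S_k` in terms of `G`. -/
lemma Skern_eq (k : ℂ) (v : E3) : Skern k v = k * Gfun (k ^ 2 * ((‖v‖ ^ 2 : ℝ) : ℂ)) := by
  unfold Skern
  split_ifs with h
  · simp [h, Gfun_zero]
  · have : (‖v‖ : ℂ) ≠ 0 := by simpa using h
    rw [sin_eq_Gfun]
    push_cast
    rw [mul_pow]
    field_simp

lemma Gfun_contDiff : ContDiff ℝ (⊤ : ℕ∞) Gfun :=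
  (Gfun_diff.contDiff (n := (⊤ : ℕ∞))).restrict_scalars ℝ

lemma Skern_contDiff (k : ℂ) : ContDiff ℝ (⊤ : ℕ∞) (Skern k) := by
  have : Skern k = fun v => k * Gfun (k ^ 2 * ((‖v‖ ^ 2 : ℝ) : ℂ)) := funext (Skern_eq k)
  rw [this]
  refine contDiff_const.mul (Gfun_contDiff.comp (contDiff_const.mul ?_))
  exact Complex.ofRealCLM.contDiff.comp (contDiff_norm_sq ℝ)

lemma Skern_fderiv (k : ℂ) (v : E3) :
    fderiv ℝ (Skern k) v (EuclideanSpace.single 2 (1 : ℝ)) =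
      (v 2 : ℂ) * (2 * k ^ 3 * deriv Gfun (k ^ 2 * ((‖v‖ ^ 2 : ℝ) : ℂ))) := by
  have hd : DifferentiableAt ℝ (Skern k) v := (Skern_contDiff k).differentiable (by simp) v
  have h1 : HasDerivAt (fun t : ℝ => v + t • EuclideanSpace.single (2 : Fin 3) (1 : ℝ))
      (EuclideanSpace.single (2 : Fin 3) (1 : ℝ)) 0 := by
    simpa using ((hasDerivAt_id (0 : ℝ)).smul_const
      (EuclideanSpace.single (2 : Fin 3) (1 : ℝ))).const_add v
  have hd' : HasFDerivAt (Skern k) (fderiv ℝ (Skern k) v)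
      (v + (0 : ℝ) • EuclideanSpace.single (2 : Fin 3) (1 : ℝ)) := by
    simpa using hd.hasFDerivAt
  have h2 := hd'.comp_hasDerivAt (0 : ℝ) h1
  have hn : ∀ t : ℝ, ‖v + t • EuclideanSpace.single (2 : Fin 3) (1 : ℝ)‖ ^ 2
      = ‖v‖ ^ 2 + 2 * t * v 2 + t ^ 2 := by
    intro t
    rw [norm_add_sq_real, norm_smul, inner_smul_right]
    rw [EuclideanSpace.inner_single_right]
    simp
    ring
  have h3 : HasDerivAt (fun t : ℝ => (((‖v‖ ^ 2 + 2 * t * v 2 + t ^ 2 : ℝ)) : ℂ))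
      (((2 * v 2 : ℝ)) : ℂ) 0 := by
    have : HasDerivAt (fun t : ℝ => ‖v‖ ^ 2 + 2 * t * v 2 + t ^ 2) (2 * v 2) 0 := by
      have := (((hasDerivAt_id (0 : ℝ)).const_mul 2).mul_const (v 2)).const_add (‖v‖ ^ 2) |>.add
        ((hasDerivAt_id (0 : ℝ)).pow 2)
      convert! this using 1
      simp
    exact this.ofReal_comp
  have h4 : HasDerivAt (fun t : ℝ => k * Gfun (k ^ 2 * ((‖v‖ ^ 2 + 2 * t * v 2 + t ^ 2 : ℝ) : ℂ)))
      (k * (deriv Gfun (k ^ 2 * ((‖v‖ ^ 2 : ℝ) : ℂ)) * (k ^ 2 * ((2 * v 2 : ℝ) : ℂ)))) 0 := by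
    refine HasDerivAt.const_mul k ?_
    have hG : HasDerivAt Gfun (deriv Gfun (k ^ 2 * ((‖v‖ ^ 2 : ℝ) : ℂ)))
        (k ^ 2 * ((‖v‖ ^ 2 + 2 * (0 : ℝ) * v 2 + 0 ^ 2 : ℝ) : ℂ)) := by
      have h0 : ‖v‖ ^ 2 + 2 * (0 : ℝ) * v 2 + 0 ^ 2 = ‖v‖ ^ 2 := by ring
      rw [h0]
      exact (Gfun_diff (k ^ 2 * ((‖v‖ ^ 2 : ℝ) : ℂ))).hasDerivAt
    exact hG.comp (0 : ℝ) (h3.const_mul (k ^ 2))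
  have h5 : (Skern k ∘ fun t : ℝ => v + t • EuclideanSpace.single (2 : Fin 3) (1 : ℝ)) =
      fun t : ℝ => k * Gfun (k ^ 2 * ((‖v‖ ^ 2 + 2 * t * v 2 + t ^ 2 : ℝ) : ℂ)) := by
    ext t
    simp only [Function.comp, Skern_eq, hn]
  rw [h5] at h2
  rw [h2.unique h4]
  push_cast
  ring

lemma emb2_cont : Continuous emb2 := by
  unfold emb2
  refine (PiLp.continuous_toLp 2 _).comp (continuous_pi fun i => ?_)
  fin_cases i
  · simp; fun_prop
  · simp; fun_prop
  · simp; fun_prop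

lemma proj32_contDiff : ContDiff ℝ (⊤ : ℕ∞) proj32 := by
  rw [contDiff_euclidean]
  intro i
  unfold proj32
  fin_cases i
  · simp; fun_prop
  · simp; fun_prop

lemma pz_formula (η : E2 → ℝ) (hη : Continuous η) (hsupp : HasCompactSupport η) (k : ℂ) (r : E3) :
    pz η k r = ∫ q : E2, (η q : ℂ) * ((r 2 : ℂ) *
      (2 * k ^ 3 * deriv Gfun (k ^ 2 * ((‖r - emb2 q‖ ^ 2 : ℝ) : ℂ)))) := by
  have hS := Skern_contDiff k
  have hSd : Differentiable ℝ (Skern k) := hS.differentiable (by simp)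
  have hSc : Continuous (Skern k) := hS.continuous
  have hS' : Continuous (fderiv ℝ (Skern k)) := hS.continuous_fderiv (by simp)
  have hηc : Continuous (fun q => (η q : ℂ)) := Complex.continuous_ofReal.comp hη
  have hηs : HasCompactSupport (fun q => (η q : ℂ)) := hsupp.comp_left (g := Complex.ofReal) (by simp)
  -- bound
  have hcomp : IsCompact (Metric.closedBall r 1 ×ˢ tsupport η) :=
    (isCompact_closedBall r 1).prod hsupp
  obtain ⟨M, hM⟩ := hcomp.exists_bound_of_continuousOn
    (f := fun x : E3 × E2 => (η x.2 : ℂ) • fderiv ℝ (Skern k) (x.1 - emb2 x.2)) (by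
      apply Continuous.continuousOn
      exact (hηc.comp continuous_snd).smul
        (hS'.comp (continuous_fst.sub (emb2_cont.comp continuous_snd))))
  have key : HasFDerivAt (pfun η k)
      (∫ q : E2, (η q : ℂ) • fderiv ℝ (Skern k) (r - emb2 q)) r := by
    refine hasFDerivAt_integral_of_dominated_of_fderiv_le (𝕜 := ℝ)
      (F := fun (r : E3) (q : E2) => (η q : ℂ) * Skern k (r - emb2 q))
      (F' := fun (r : E3) (q : E2) => (η q : ℂ) • fderiv ℝ (Skern k) (r - emb2 q))
      (s := Metric.closedBall r 1)
      (bound := (tsupport η).indicator (fun _ => M)) (Metric.closedBall_mem_nhds r one_pos)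
      ?_ ?_ ?_ ?_ ?_ ?_
    · refine Filter.Eventually.of_forall fun x => Continuous.aestronglyMeasurable ?_
      exact hηc.mul (hSc.comp (continuous_const.sub emb2_cont))
    · refine Continuous.integrable_of_hasCompactSupport ?_ hηs.mul_right
      exact hηc.mul (hSc.comp (continuous_const.sub emb2_cont))
    · refine Continuous.aestronglyMeasurable ?_
      exact hηc.smul (hS'.comp (continuous_const.sub emb2_cont))
    · refine Filter.Eventually.of_forall fun q x hx => ?_
      by_cases hq : q ∈ tsupport η
      · rw [Set.indicator_of_mem hq]
        exact hM (x, q) ⟨hx, hq⟩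
      · rw [Set.indicator_of_notMem hq, image_eq_zero_of_notMem_tsupport hq]
        simp
    · rw [integrable_indicator_iff (isClosed_tsupport η).measurableSet]
      exact integrableOn_const (hsupp.measure_lt_top.ne)
    · refine Filter.Eventually.of_forall fun q x hx => ?_
      have h1 : HasFDerivAt (fun x => Skern k (x - emb2 q)) (fderiv ℝ (Skern k) (x - emb2 q)) x := by
        have h2 := HasFDerivAt.comp x (hSd (x - emb2 q)).hasFDerivAt
          ((hasFDerivAt_id (𝕜 := ℝ) x).sub_const (emb2 q))
        rw [ContinuousLinearMap.comp_id] at h2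
        exact h2
      exact h1.const_mul _
  have hint : Integrable (fun q : E2 => (η q : ℂ) • fderiv ℝ (Skern k) (r - emb2 q)) := by
    refine Continuous.integrable_of_hasCompactSupport ?_
      (HasCompactSupport.intro (K := tsupport η) hsupp fun q hq => ?_)
    swap
    · rw [image_eq_zero_of_notMem_tsupport hq, Complex.ofReal_zero]
      ext v
      simp
    exact hηc.smul (hS'.comp (continuous_const.sub emb2_cont))
  rw [pz, key.fderiv, ContinuousLinearMap.integral_apply hint]
  congr 1
  ext q
  have h2 : (r - emb2 q) 2 = r 2 := by simp [emb2]
  rw [smul_apply, Skern_fderiv, h2, smul_eq_mul]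

section decay

variable {P : Type*} [NormedAddCommGroup P] [NormedSpace ℝ P]

/-- The distance `R = sqrt (ρ² + z²)`. -/
def Rad (z : P →L[ℝ] ℝ) (x : P × ℝ) : ℝ := √(x.2 ^ 2 + z x.1 ^ 2)

set_option linter.unusedSectionVars false in
lemma isOpen_half : IsOpen {x : P × ℝ | 0 < x.2} := isOpen_lt continuous_const continuous_snd

lemma Rad_pos (z : P →L[ℝ] ℝ) {x : P × ℝ} (hx : 0 < x.2) : 0 < Rad z x :=
  Real.sqrt_pos.2 (by positivity)

lemma Rad_cont (z : P →L[ℝ] ℝ) : Continuous (Rad z) := by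
  unfold Rad
  fun_prop

lemma Rad_contDiffOn (z : P →L[ℝ] ℝ) :
    ContDiffOn ℝ (⊤ : ℕ∞) (Rad z) {x : P × ℝ | 0 < x.2} := by
  unfold Rad
  refine ContDiffOn.sqrt ?_ ?_
  · apply ContDiff.contDiffOn
    exact (contDiff_snd.pow 2).add ((z.contDiff.comp contDiff_fst).pow 2)
  · intro x hx
    have : 0 < x.2 := hx
    positivity

/-- The function `f R / ρ`. -/
def Uop (z : P →L[ℝ] ℝ) (f : P × ℝ → ℝ) (x : P × ℝ) : ℝ := f x * Rad z x / x.2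

/-- The transport operator `f ↦ ∂_ρ (f R / ρ)`. -/
def Transp (z : P →L[ℝ] ℝ) (f : P × ℝ → ℝ) (x : P × ℝ) : ℝ := fderiv ℝ (Uop z f) x (0, 1)

lemma Uop_contDiffOn (z : P →L[ℝ] ℝ) {f : P × ℝ → ℝ}
    (hf : ContDiffOn ℝ (⊤ : ℕ∞) f {x : P × ℝ | 0 < x.2}) :
    ContDiffOn ℝ (⊤ : ℕ∞) (Uop z f) {x : P × ℝ | 0 < x.2} :=
  (hf.mul (Rad_contDiffOn z)).div contDiff_snd.contDiffOn (fun _ hx => ne_of_gt hx)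

lemma Transp_contDiffOn (z : P →L[ℝ] ℝ) {f : P × ℝ → ℝ}
    (hf : ContDiffOn ℝ (⊤ : ℕ∞) f {x : P × ℝ | 0 < x.2}) :
    ContDiffOn ℝ (⊤ : ℕ∞) (Transp z f) {x : P × ℝ | 0 < x.2} :=
  ((Uop_contDiffOn z hf).fderiv_of_isOpen (m := (⊤ : ℕ∞)) isOpen_half (by simp)).clm_apply
    contDiffOn_const

lemma Uop_hasDerivAt (z : P →L[ℝ] ℝ) {f : P × ℝ → ℝ}
    (hf : ContDiffOn ℝ (⊤ : ℕ∞) f {x : P × ℝ | 0 < x.2}) (p : P) {ρ : ℝ} (hρ : 0 < ρ) :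
    HasDerivAt (fun ρ => Uop z f (p, ρ)) (Transp z f (p, ρ)) ρ := by
  have h1 : DifferentiableAt ℝ (Uop z f) (p, ρ) :=
    ((Uop_contDiffOn z hf).contDiffAt (isOpen_half.mem_nhds hρ)).differentiableAt (by simp)
  exact h1.hasFDerivAt.comp_hasDerivAt ρ ((hasDerivAt_const ρ p).prodMk (hasDerivAt_id ρ))

lemma cexp_hasDerivAt (z : P →L[ℝ] ℝ) (k : ℂ) (p : P) {ρ : ℝ} (hρ : 0 < ρ) :
    HasDerivAt (fun ρ => Complex.exp (Complex.I * k * (Rad z (p, ρ) : ℂ)))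
      (Complex.exp (Complex.I * k * (Rad z (p, ρ) : ℂ)) *
        (Complex.I * k * ((ρ / Rad z (p, ρ) : ℝ) : ℂ))) ρ := by
  have h1 : HasDerivAt (fun ρ => Rad z (p, ρ)) (ρ / Rad z (p, ρ)) ρ := by
    have h0 : HasDerivAt (fun ρ : ℝ => ρ ^ 2 + z p ^ 2) (2 * ρ) ρ := by
      simpa using (hasDerivAt_pow 2 ρ).add_const (z p ^ 2)
    have h2 := h0.sqrt (by positivity)
    convert! h2 using 1
    unfold Rad
    dsimp only
    rw [mul_div_mul_left _ _ two_ne_zero]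
  exact (h1.ofReal_comp.const_mul (Complex.I * k)).cexp

theorem decay (z : P →L[ℝ] ℝ) (A : Set P) (hA : IsCompact A) (δ L : ℝ) (hδ : 0 < δ)
    (hL : δ < L) (c₀ : ℝ) (n : ℕ) : ∀ f : P × ℝ → ℝ,
    ContDiffOn ℝ (⊤ : ℕ∞) f {x : P × ℝ | 0 < x.2} →
    (∀ p ∈ A, ∀ ρ, 0 < ρ → ρ < 2 * δ → f (p, ρ) = 0) → (∀ p ∈ A, ∀ ρ, 0 < ρ → L - 1 < ρ → f (p, ρ) = 0) →
    ∃ C : ℝ, ∀ p ∈ A, ∀ k : ℂ, 1 ≤ |k.re| → |k.im| ≤ c₀ →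
      ‖∫ ρ in δ..L, (f (p, ρ) : ℂ) * Complex.exp (Complex.I * k * (Rad z (p, ρ) : ℂ))‖
        ≤ C / |k.re| ^ n := by
  induction n with
  | zero =>
    intro f hf _ _
    have hcomp : IsCompact (A ×ˢ Set.Icc δ L) := hA.prod isCompact_Icc
    obtain ⟨M, hM⟩ := hcomp.exists_bound_of_continuousOn (f := f)
      (hf.continuousOn.mono fun x hx => lt_of_lt_of_le hδ hx.2.1)
    obtain ⟨N, hN⟩ := hcomp.exists_bound_of_continuousOn (f := Rad z) (Rad_cont z).continuousOn
    refine ⟨M * Real.exp (c₀ * N) * |L - δ|, fun p hp k _ hk => ?_⟩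
    rw [pow_zero, div_one]
    refine intervalIntegral.norm_integral_le_of_norm_le_const fun ρ hρ => ?_
    rw [Set.uIoc_of_le hL.le] at hρ
    have hx : (p, ρ) ∈ A ×ˢ Set.Icc δ L := ⟨hp, hρ.1.le, hρ.2⟩
    have h1 := hM _ hx
    have h2 := hN _ hx
    rw [norm_mul, Complex.norm_real, Complex.norm_exp]
    have h3 : (Complex.I * k * (Rad z (p, ρ) : ℂ)).re = -k.im * Rad z (p, ρ) := by simp
    rw [h3]
    have h4 : -k.im * Rad z (p, ρ) ≤ c₀ * N := by
      calc -k.im * Rad z (p, ρ) ≤ |-k.im * Rad z (p, ρ)| := le_abs_self _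
        _ = |k.im| * ‖Rad z (p, ρ)‖ := by rw [abs_mul, abs_neg, Real.norm_eq_abs]
        _ ≤ c₀ * N := mul_le_mul hk h2 (norm_nonneg _) ((abs_nonneg _).trans hk)
    exact mul_le_mul h1 (Real.exp_le_exp.2 h4) (Real.exp_pos _).le ((norm_nonneg _).trans h1)
  | succ n ih =>
    intro f hf h0 h1
    obtain ⟨C, hC⟩ := ih (Transp z f) (Transp_contDiffOn z hf)
      (by
        intro p hp ρ hρ0 hρ
        have h2 := Uop_hasDerivAt z hf p hρ0
        have h3 : (fun ρ => Uop z f (p, ρ)) =ᶠ[nhds ρ] fun _ => 0 := by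
          filter_upwards [Iio_mem_nhds hρ, Ioi_mem_nhds hρ0] with s hs hs0
          simp [Uop, h0 p hp s hs0 hs]
        exact (h2.congr_of_eventuallyEq h3.symm).unique (hasDerivAt_const ρ (0 : ℝ)))
      (by
        intro p hp ρ hρ0 hρ
        have h2 := Uop_hasDerivAt z hf p hρ0
        have h3 : (fun ρ => Uop z f (p, ρ)) =ᶠ[nhds ρ] fun _ => 0 := by
          filter_upwards [Ioi_mem_nhds hρ, Ioi_mem_nhds hρ0] with s hs hs0
          simp [Uop, h1 p hp s hs0 hs]
        exact (h2.congr_of_eventuallyEq h3.symm).unique (hasDerivAt_const ρ (0 : ℝ)))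
    refine ⟨C, fun p hp k hk1 hk2 => ?_⟩
    have hk0 : k ≠ 0 := by
      rintro rfl
      norm_num at hk1
    have hpos : ∀ ρ ∈ Set.uIcc δ L, 0 < ρ := by
      intro ρ hρ
      rw [Set.uIcc_of_le hL.le] at hρ
      exact lt_of_lt_of_le hδ hρ.1
    have hTc : ContinuousOn (fun ρ => Transp z f (p, ρ)) (Set.uIcc δ L) :=
      (Transp_contDiffOn z hf).continuousOn.comp (by fun_prop) hpos
    have hRc : Continuous fun ρ => Rad z (p, ρ) := (Rad_cont z).comp (by fun_prop)
    have hibp := intervalIntegral.integral_mul_deriv_eq_deriv_mul (a := δ) (b := L)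
      (u := fun ρ => (Uop z f (p, ρ) : ℂ)) (u' := fun ρ => (Transp z f (p, ρ) : ℂ))
      (fun ρ hρ => (Uop_hasDerivAt z hf p (hpos ρ hρ)).ofReal_comp)
      (fun ρ hρ => cexp_hasDerivAt z k p (hpos ρ hρ))
      (Complex.continuous_ofReal.comp_continuousOn hTc).intervalIntegrable
      (by
        apply ContinuousOn.intervalIntegrable
        refine ContinuousOn.mul (Continuous.continuousOn (Complex.continuous_exp.comp
          (continuous_const.mul (Complex.continuous_ofReal.comp hRc)))) (ContinuousOn.mul (by fun_prop) ?_)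
        refine Complex.continuous_ofReal.comp_continuousOn ?_
        exact continuousOn_id.div hRc.continuousOn fun ρ hρ => (Rad_pos z (hpos ρ hρ)).ne')
    have hb : Uop z f (p, L) = 0 := by simp [Uop, h1 p hp L (by linarith) (by linarith)]
    have ha : Uop z f (p, δ) = 0 := by simp [Uop, h0 p hp δ hδ (by linarith)]
    rw [ha, hb] at hibp
    have hl : ∫ ρ in δ..L, (Uop z f (p, ρ) : ℂ) *
        (Complex.exp (Complex.I * k * (Rad z (p, ρ) : ℂ)) *
        (Complex.I * k * ((ρ / Rad z (p, ρ) : ℝ) : ℂ))) =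
        (Complex.I * k) * ∫ ρ in δ..L, (f (p, ρ) : ℂ) *
          Complex.exp (Complex.I * k * (Rad z (p, ρ) : ℂ)) := by
      rw [← intervalIntegral.integral_const_mul]
      refine intervalIntegral.integral_congr fun ρ hρ => ?_
      have hρ0 : (ρ : ℂ) ≠ 0 := by exact_mod_cast (hpos ρ hρ).ne'
      have hR0 : (Rad z (p, ρ) : ℂ) ≠ 0 := by
        exact_mod_cast (Rad_pos z (x := (p, ρ)) (hpos ρ hρ)).ne'
      simp only [Uop]
      push_cast
      field_simp
    rw [hl] at hibp
    have hn := congrArg norm hibp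
    rw [norm_mul, norm_mul, Complex.norm_I, one_mul] at hn
    simp only [Complex.ofReal_zero, zero_mul, sub_self, zero_sub, norm_neg] at hn
    have hb := hC p hp k hk1 hk2
    rw [← hn] at hb
    have hkk : |k.re| ≤ ‖k‖ := Complex.abs_re_le_norm k
    have hp0 : 0 < |k.re| := by linarith
    rw [pow_succ, ← div_div, le_div_iff₀ hp0, mul_comm]
    refine le_trans ?_ hb
    gcongr

end decay

/-- The unit vector with angle `θ`. -/
def edir (θ : ℝ) : E2 := WithLp.toLp 2 ![Real.cos θ, Real.sin θ]

lemma edir_contDiff : ContDiff ℝ (⊤ : ℕ∞) edir := by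
  rw [contDiff_euclidean]
  intro i
  unfold edir
  fin_cases i
  · simpa using Real.contDiff_cos
  · simpa using Real.contDiff_sin

lemma edir_norm (θ : ℝ) : ‖edir θ‖ = 1 := by
  rw [EuclideanSpace.norm_eq]
  simp [edir]

lemma polar_E2 (F : E2 → ℂ) :
    ∫ x, F x = ∫ p in Set.Ioi (0 : ℝ) ×ˢ Set.Ioo (-π) π, (p.1 : ℂ) * F (p.1 • edir p.2) := by
  rw [← (PiLp.volume_preserving_toLp (Fin 2)).integral_comp
    (MeasurableEquiv.toLp 2 _).measurableEmbedding,
    ← (volume_preserving_finTwoArrow ℝ).symm.integral_comp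
    (MeasurableEquiv.finTwoArrow).symm.measurableEmbedding,
    ← integral_comp_polarCoord_symm]
  refine setIntegral_congr_fun (measurableSet_Ioi.prod measurableSet_Ioo) fun p _ => ?_
  simp only [Complex.real_smul]
  congr 2
  ext i
  fin_cases i <;> simp [edir, MeasurableEquiv.finTwoArrow, polarCoord]

lemma norm_sub_emb (r : E3) (x : E2) :
    ‖r - emb2 (x + proj32 r)‖ ^ 2 = ‖x‖ ^ 2 + r 2 ^ 2 := by
  rw [EuclideanSpace.norm_sq_eq, EuclideanSpace.norm_sq_eq, Fin.sum_univ_three, Fin.sum_univ_two]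
  simp [emb2, proj32]

lemma proj32_norm (r : E3) : ‖proj32 r‖ ≤ ‖r‖ := by
  rw [← sq_le_sq₀ (norm_nonneg _) (norm_nonneg _)]
  rw [EuclideanSpace.norm_sq_eq, EuclideanSpace.norm_sq_eq, Fin.sum_univ_three, Fin.sum_univ_two]
  simp [proj32]
  positivity

/-- `z` as a linear functional on the parameter space. -/
def zfun : E3 × ℝ →L[ℝ] ℝ :=
  (EuclideanSpace.proj (2 : Fin 3)).comp (ContinuousLinearMap.fst ℝ E3 ℝ)

lemma zfun_apply (p : E3 × ℝ) : zfun p = p.1 2 := rfl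

/-- The amplitude after the first integration by parts. -/
def amp (η : E2 → ℝ) (x : (E3 × ℝ) × ℝ) : ℝ :=
  x.1.1 2 * fderiv ℝ η (x.2 • edir x.1.2 + proj32 x.1.1) (edir x.1.2) / Rad zfun x

lemma amp_contDiffOn (η : E2 → ℝ) (hη : ContDiff ℝ (⊤ : ℕ∞) η) :
    ContDiffOn ℝ (⊤ : ℕ∞) (amp η) {x : (E3 × ℝ) × ℝ | 0 < x.2} := by
  refine ContDiffOn.div ?_ (Rad_contDiffOn zfun) (fun x hx => (Rad_pos zfun hx).ne')
  apply ContDiff.contDiffOn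
  have he : ContDiff ℝ (⊤ : ℕ∞) fun x : (E3 × ℝ) × ℝ => edir x.1.2 :=
    edir_contDiff.comp (contDiff_snd.comp contDiff_fst)
  have hp : ContDiff ℝ (⊤ : ℕ∞) fun x : (E3 × ℝ) × ℝ => proj32 x.1.1 :=
    proj32_contDiff.comp (contDiff_fst.comp contDiff_fst)
  refine ContDiff.mul ?_ (ContDiff.clm_apply ?_ he)
  · exact zfun.contDiff.comp contDiff_fst
  · exact (hη.fderiv_right (m := (⊤ : ℕ∞)) (by simp)).comp ((contDiff_snd.smul he).add hp)

lemma fderiv_zero_of_one (η : E2 → ℝ) (δ : ℝ) (r : E3) (θ : ℝ)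
    (hone : ∀ q : E2, ‖q - proj32 r‖ ≤ 2 * δ → η q = 1) {ρ : ℝ} (h0 : 0 ≤ ρ) (h1 : ρ < 2 * δ) :
    fderiv ℝ η (ρ • edir θ + proj32 r) = 0 := by
  have hev : η =ᶠ[nhds (ρ • edir θ + proj32 r)] fun _ => 1 := by
    have hopen : Metric.ball (proj32 r) (2 * δ) ∈ nhds (ρ • edir θ + proj32 r) := by
      refine Metric.isOpen_ball.mem_nhds ?_
      rw [mem_ball_iff_norm, add_sub_cancel_right, norm_smul, edir_norm, mul_one,
        Real.norm_of_nonneg h0]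
      exact h1
    filter_upwards [hopen] with q hq
    exact hone q (mem_ball_iff_norm.1 hq).le
  rw [hev.fderiv_eq]
  simp

lemma radial (η : E2 → ℝ) (hη : ContDiff ℝ (⊤ : ℕ∞) η) (δ L : ℝ) (hδ : 0 < δ) (hL : δ < L)
    (r : E3) (θ : ℝ) (hone : ∀ q : E2, ‖q - proj32 r‖ ≤ 2 * δ → η q = 1)
    (hout : η (L • edir θ + proj32 r) = 0) (k : ℂ) :
    ∫ ρ in (0 : ℝ)..L, (ρ : ℂ) * ((η (ρ • edir θ + proj32 r) : ℂ) * ((r 2 : ℂ) *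
      (2 * k ^ 3 * deriv Gfun (k ^ 2 * ((ρ ^ 2 + r 2 ^ 2 : ℝ) : ℂ)))))
    = - Complex.sin (k * (r 2 : ℂ)) -
      ∫ ρ in δ..L, (amp η ((r, θ), ρ) : ℂ) * Complex.sin (k * (Rad zfun ((r, θ), ρ) : ℂ)) := by
  have hηd : Differentiable ℝ η := hη.differentiable (by simp)
  have hη' : Continuous (fderiv ℝ η) := hη.continuous_fderiv (by simp)
  have hG' : Continuous (deriv Gfun) := Gfun_diff.contDiff (n := 1) |>.continuous_deriv le_rfl
  have hu : ∀ ρ : ℝ, HasDerivAt (fun ρ : ℝ => (η (ρ • edir θ + proj32 r) : ℂ))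
      ((fderiv ℝ η (ρ • edir θ + proj32 r) (edir θ) : ℝ) : ℂ) ρ := by
    intro ρ
    have h1 : HasDerivAt (fun ρ : ℝ => ρ • edir θ + proj32 r) (edir θ) ρ := by
      simpa using ((hasDerivAt_id ρ).smul_const (edir θ)).add_const (proj32 r)
    exact ((hηd _).hasFDerivAt.comp_hasDerivAt ρ h1).ofReal_comp
  have hv : ∀ ρ : ℝ, HasDerivAt (fun ρ : ℝ =>
      (r 2 : ℂ) * (k * Gfun (k ^ 2 * ((ρ ^ 2 + r 2 ^ 2 : ℝ) : ℂ))))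
      ((ρ : ℂ) * ((r 2 : ℂ) *
      (2 * k ^ 3 * deriv Gfun (k ^ 2 * ((ρ ^ 2 + r 2 ^ 2 : ℝ) : ℂ))))) ρ := by
    intro ρ
    have h0 : HasDerivAt (fun ρ : ℝ => ρ ^ 2 + r 2 ^ 2) (2 * ρ) ρ := by
      simpa using (hasDerivAt_pow 2 ρ).add_const (r 2 ^ 2)
    have h1 := (Gfun_diff (k ^ 2 * ((ρ ^ 2 + r 2 ^ 2 : ℝ) : ℂ))).hasDerivAt.comp ρ
      (h0.ofReal_comp.const_mul (k ^ 2))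
    have h2 := (h1.const_mul k).const_mul (r 2 : ℂ)
    convert! h2 using 1
    push_cast
    ring
  have hec : Continuous fun ρ : ℝ => ρ • edir θ + proj32 r := by fun_prop
  have hhc : Continuous fun ρ : ℝ => ((fderiv ℝ η (ρ • edir θ + proj32 r) (edir θ) : ℝ) : ℂ) :=
    Complex.continuous_ofReal.comp ((hη'.comp hec).clm_apply continuous_const)
  have harg : Continuous fun ρ : ℝ => k ^ 2 * ((ρ ^ 2 + r 2 ^ 2 : ℝ) : ℂ) :=
    continuous_const.mul (Complex.continuous_ofReal.comp (by fun_prop))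
  have hvc : Continuous fun ρ : ℝ =>
      (r 2 : ℂ) * (k * Gfun (k ^ 2 * ((ρ ^ 2 + r 2 ^ 2 : ℝ) : ℂ))) :=
    continuous_const.mul (continuous_const.mul (Gfun_diff.continuous.comp harg))
  have hibp := intervalIntegral.integral_mul_deriv_eq_deriv_mul (a := (0 : ℝ)) (b := L)
    (fun ρ _ => hu ρ) (fun ρ _ => hv ρ) (hhc.intervalIntegrable _ _)
    (Continuous.intervalIntegrable (Complex.continuous_ofReal.mul (continuous_const.mul
      (continuous_const.mul (hG'.comp harg)))) _ _)
  have hl : ∀ ρ : ℝ, (ρ : ℂ) * ((η (ρ • edir θ + proj32 r) : ℂ) * ((r 2 : ℂ) *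
      (2 * k ^ 3 * deriv Gfun (k ^ 2 * ((ρ ^ 2 + r 2 ^ 2 : ℝ) : ℂ))))) =
      (η (ρ • edir θ + proj32 r) : ℂ) * ((ρ : ℂ) * ((r 2 : ℂ) *
      (2 * k ^ 3 * deriv Gfun (k ^ 2 * ((ρ ^ 2 + r 2 ^ 2 : ℝ) : ℂ))))) := fun ρ => by ring
  simp_rw [hl]
  rw [hibp, hout]
  have h0 : η ((0 : ℝ) • edir θ + proj32 r) = 1 := hone _ (by simp; positivity)
  rw [h0]
  have hs : Complex.sin (k * (r 2 : ℂ)) =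
      (r 2 : ℂ) * (k * Gfun (k ^ 2 * (((0 : ℝ) ^ 2 + r 2 ^ 2 : ℝ) : ℂ))) := by
    rw [sin_eq_Gfun]
    push_cast
    rw [mul_pow]
    simp
    ring
  rw [hs]
  have hsplit := intervalIntegral.integral_add_adjacent_intervals (μ := volume)
    (a := (0 : ℝ)) (b := δ) (c := L)
    ((hhc.mul hvc).intervalIntegrable 0 δ) ((hhc.mul hvc).intervalIntegrable δ L)
  have hz : ∫ ρ in (0 : ℝ)..δ, ((fderiv ℝ η (ρ • edir θ + proj32 r) (edir θ) : ℝ) : ℂ) *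
      ((r 2 : ℂ) * (k * Gfun (k ^ 2 * ((ρ ^ 2 + r 2 ^ 2 : ℝ) : ℂ)))) = 0 := by
    rw [intervalIntegral.integral_congr (g := fun _ => 0)]
    · simp
    · intro ρ hρ
      rw [Set.uIcc_of_le hδ.le] at hρ
      dsimp only
      rw [fderiv_zero_of_one η δ r θ hone hρ.1 (by linarith [hρ.2])]
      simp
  simp only [Pi.mul_apply] at hsplit
  rw [hz, zero_add] at hsplit
  rw [← hsplit]
  have hlast : ∫ ρ in δ..L, ((fderiv ℝ η (ρ • edir θ + proj32 r) (edir θ) : ℝ) : ℂ) *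
      ((r 2 : ℂ) * (k * Gfun (k ^ 2 * ((ρ ^ 2 + r 2 ^ 2 : ℝ) : ℂ)))) =
      ∫ ρ in δ..L, (amp η ((r, θ), ρ) : ℂ) * Complex.sin (k * (Rad zfun ((r, θ), ρ) : ℂ)) := by
    refine intervalIntegral.integral_congr fun ρ hρ => ?_
    rw [Set.uIcc_of_le hL.le] at hρ
    have hρ0 : 0 < ρ := lt_of_lt_of_le hδ hρ.1
    have hR := Rad_pos zfun (x := ((r, θ), ρ)) hρ0
    have hR0 : (Rad zfun ((r, θ), ρ) : ℂ) ≠ 0 := by exact_mod_cast hR.ne'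
    have hsq : Rad zfun ((r, θ), ρ) ^ 2 = ρ ^ 2 + r 2 ^ 2 := Real.sq_sqrt (by positivity)
    have hsq' : ((ρ ^ 2 + r 2 ^ 2 : ℝ) : ℂ) = (Rad zfun ((r, θ), ρ) : ℂ) ^ 2 := by
      rw [← hsq]
      push_cast
      rfl
    dsimp only
    rw [hsq', sin_eq_Gfun, mul_pow, amp]
    push_cast
    field_simp
  rw [hlast]
  simp

lemma pz_polar (η : E2 → ℝ) (hη : ContDiff ℝ (⊤ : ℕ∞) η) (hsupp : HasCompactSupport η)
    (δ L : ℝ) (hδ : 0 < δ) (hL : δ < L)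
    (r : E3) (hone : ∀ q : E2, ‖q - proj32 r‖ ≤ 2 * δ → η q = 1)
    (hout : ∀ θ ρ : ℝ, L ≤ ρ → η (ρ • edir θ + proj32 r) = 0) (k : ℂ) :
    pz η k r + 2 * π * Complex.sin (k * (r 2 : ℂ)) =
      ∫ θ in Set.Ioo (-π) π, - ∫ ρ in δ..L,
        (amp η ((r, θ), ρ) : ℂ) * Complex.sin (k * (Rad zfun ((r, θ), ρ) : ℂ)) := by
  have hG' : Continuous (deriv Gfun) := Gfun_diff.contDiff (n := 1) |>.continuous_deriv le_rfl
  set H : ℝ × ℝ → ℂ := fun p => (p.1 : ℂ) * ((η (p.1 • edir p.2 + proj32 r) : ℂ) * ((r 2 : ℂ) *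
      (2 * k ^ 3 * deriv Gfun (k ^ 2 * ((p.1 ^ 2 + r 2 ^ 2 : ℝ) : ℂ))))) with hH
  have hHc : Continuous H := by
    have h1 : Continuous fun p : ℝ × ℝ => p.1 • edir p.2 + proj32 r :=
      (continuous_fst.smul (edir_contDiff.continuous.comp continuous_snd)).add continuous_const
    have h2 : Continuous fun p : ℝ × ℝ => k ^ 2 * ((p.1 ^ 2 + r 2 ^ 2 : ℝ) : ℂ) :=
      continuous_const.mul (Complex.continuous_ofReal.comp (by fun_prop))
    exact (Complex.continuous_ofReal.comp continuous_fst).mul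
      ((Complex.continuous_ofReal.comp (hη.continuous.comp h1)).mul
        (continuous_const.mul (continuous_const.mul (hG'.comp h2))))
  have h1 : pz η k r = ∫ p in Set.Ioi (0 : ℝ) ×ˢ Set.Ioo (-π) π, H p := by
    rw [pz_formula η hη.continuous hsupp, ← integral_add_right_eq_self _ (proj32 r), polar_E2]
    refine setIntegral_congr_fun (measurableSet_Ioi.prod measurableSet_Ioo) fun p _ => ?_
    simp only [hH]
    rw [norm_sub_emb, norm_smul, edir_norm, mul_one, Real.norm_eq_abs, sq_abs]
  have h2 : ∫ p in Set.Ioi (0 : ℝ) ×ˢ Set.Ioo (-π) π, H p =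
      ∫ p in Set.Ioc (0 : ℝ) L ×ˢ Set.Ioo (-π) π, H p := by
    refine (setIntegral_eq_of_subset_of_forall_sdiff_eq_zero
      (measurableSet_Ioi.prod measurableSet_Ioo)
      (Set.prod_mono Set.Ioc_subset_Ioi_self le_rfl) ?_)
    rintro ⟨ρ, θ⟩ ⟨⟨ha, hb⟩, hc⟩
    have : L ≤ ρ := by
      by_contra hlt
      exact hc ⟨⟨ha, (not_le.1 hlt).le⟩, hb⟩
    simp [hH, hout θ ρ this]
  have hint : IntegrableOn H (Set.Ioc (0 : ℝ) L ×ˢ Set.Ioo (-π) π)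
      ((volume : Measure ℝ).prod (volume : Measure ℝ)) := by
    have : IntegrableOn H (Set.Icc (0 : ℝ) L ×ˢ Set.Icc (-π) π)
        ((volume : Measure ℝ).prod (volume : Measure ℝ)) :=
      hHc.continuousOn.integrableOn_compact (isCompact_Icc.prod isCompact_Icc)
    exact this.mono_set (Set.prod_mono Set.Ioc_subset_Icc_self Set.Ioo_subset_Icc_self)
  have hint' : Integrable H ((volume.restrict (Set.Ioc (0 : ℝ) L)).prod
      (volume.restrict (Set.Ioo (-π) π))) := by
    rwa [Measure.prod_restrict]
  have h3 : ∫ p in Set.Ioc (0 : ℝ) L ×ˢ Set.Ioo (-π) π, H p =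
      ∫ θ in Set.Ioo (-π) π, ∫ ρ in Set.Ioc (0 : ℝ) L, H (ρ, θ) := by
    rw [Measure.volume_eq_prod, ← Measure.prod_restrict]
    exact integral_prod_symm H hint'
  have hX : Integrable (fun θ => ∫ ρ in Set.Ioc (0 : ℝ) L, H (ρ, θ))
      (volume.restrict (Set.Ioo (-π) π)) := hint'.integral_prod_right
  have hc : (2 * π * Complex.sin (k * (r 2 : ℂ)) : ℂ) =
      ∫ _θ in Set.Ioo (-π) π, Complex.sin (k * (r 2 : ℂ)) := by
    rw [setIntegral_const, Real.volume_real_Ioo_of_le (by linarith [Real.pi_pos]),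
      Complex.real_smul]
    push_cast
    ring
  rw [h1, h2, h3, hc, ← integral_add hX (integrable_const _)]
  refine integral_congr_ae (Filter.Eventually.of_forall fun θ => ?_)
  have hrad := radial η hη δ L hδ hL r θ hone (hout θ L le_rfl) k
  rw [intervalIntegral.integral_of_le (by linarith)] at hrad
  simp only [hH]
  rw [hrad]
  ring

theorem stmt5 (η : E2 → ℝ) (hη : ContDiff ℝ (⊤ : ℕ∞) η) (hsupp : HasCompactSupport η)
    (K : Set E3) (hK : IsCompact K) (δ : ℝ) (hδ : 0 < δ)
    (hone : ∀ r ∈ K, ∀ q : E2, ‖q - proj32 r‖ ≤ 2 * δ → η q = 1) :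
    ∀ c₀ > (0:ℝ), ∀ n : ℕ, ∃ C : ℝ, ∀ r ∈ K, ∀ k : ℂ,
      1 ≤ k.re → |k.im| ≤ c₀ →
      ‖pz η k r + 2 * π * Complex.sin (k * (r 2 : ℂ))‖ ≤ C / k.re ^ n := by
  intro c₀ hc₀ n
  obtain ⟨B₁, hB₁⟩ := hsupp.isBounded.exists_norm_le
  obtain ⟨B₂, hB₂⟩ := hK.isBounded.exists_norm_le
  set L : ℝ := |B₁| + |B₂| + δ + 2 with hLdef
  have hL : δ < L := by
    have := abs_nonneg B₁
    have := abs_nonneg B₂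
    linarith
  have hfar : ∀ r ∈ K, ∀ θ ρ : ℝ, L - 1 < ρ → ρ • edir θ + proj32 r ∉ tsupport η := by
    intro r hr θ ρ hρ hmem
    have h1 := hB₁ _ hmem
    have h2 := (proj32_norm r).trans (hB₂ r hr)
    have h3 : ‖ρ • edir θ‖ ≤ ‖ρ • edir θ + proj32 r‖ + ‖proj32 r‖ := norm_le_add_norm_add _ _
    rw [norm_smul, edir_norm, mul_one] at h3
    have h4 := le_abs_self ρ
    rw [← Real.norm_eq_abs] at h4
    have := le_abs_self B₁
    have := le_abs_self B₂
    linarith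
  obtain ⟨C, hC⟩ := decay zfun (K ×ˢ Set.Icc (-π) π) (hK.prod isCompact_Icc) δ L hδ hL c₀ n
    (amp η) (amp_contDiffOn η hη)
    (by
      rintro ⟨r, θ⟩ ⟨hr, _⟩ ρ h0 h1
      simp only [amp]
      rw [fderiv_zero_of_one η δ r θ (hone r hr) h0.le h1]
      simp)
    (by
      rintro ⟨r, θ⟩ ⟨hr, _⟩ ρ h0 h1
      simp only [amp]
      rw [fderiv_of_notMem_tsupport (𝕜 := ℝ) (hfar r hr θ ρ h1)]
      simp)
  refine ⟨C * (2 * π), fun r hr k hk1 hk2 => ?_⟩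
  rw [pz_polar η hη hsupp δ L hδ hL r (hone r hr)
    (fun θ ρ hρ => image_eq_zero_of_notMem_tsupport (hfar r hr θ ρ (by linarith))) k]
  have habs : |k.re| = k.re := abs_of_nonneg (by linarith)
  have hb : ∀ θ ∈ Set.Ioo (-π) π, ‖- ∫ ρ in δ..L,
      (amp η ((r, θ), ρ) : ℂ) * Complex.sin (k * (Rad zfun ((r, θ), ρ) : ℂ))‖
      ≤ C / k.re ^ n := by
    intro θ hθ
    have hp : (r, θ) ∈ K ×ˢ Set.Icc (-π) π := ⟨hr, hθ.1.le, hθ.2.le⟩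
    have e1 := hC (r, θ) hp k (by rwa [habs]) hk2
    have e2 := hC (r, θ) hp (-k) (by rwa [Complex.neg_re, abs_neg, habs])
      (by rwa [Complex.neg_im, abs_neg])
    rw [Complex.neg_re, abs_neg] at e2
    rw [habs] at e1 e2
    have hac : ContinuousOn (fun ρ => (amp η ((r, θ), ρ) : ℂ)) (Set.uIcc δ L) := by
      refine Complex.continuous_ofReal.comp_continuousOn ?_
      refine (amp_contDiffOn η hη).continuousOn.comp (by fun_prop) fun ρ hρ => ?_
      rw [Set.uIcc_of_le hL.le] at hρ
      exact lt_of_lt_of_le hδ hρ.1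
    have hRc : Continuous fun ρ => Rad zfun ((r, θ), ρ) := (Rad_cont zfun).comp (by fun_prop)
    have hi : ∀ k' : ℂ, IntervalIntegrable (fun ρ => (amp η ((r, θ), ρ) : ℂ) *
        Complex.exp (Complex.I * k' * (Rad zfun ((r, θ), ρ) : ℂ))) volume δ L := fun k' =>
      (hac.mul (Continuous.continuousOn (Complex.continuous_exp.comp
        (continuous_const.mul (Complex.continuous_ofReal.comp hRc))))).intervalIntegrable
    have heq : ∫ ρ in δ..L,
        (amp η ((r, θ), ρ) : ℂ) * Complex.sin (k * (Rad zfun ((r, θ), ρ) : ℂ)) =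
        (Complex.I / 2) * ((∫ ρ in δ..L, (amp η ((r, θ), ρ) : ℂ) *
          Complex.exp (Complex.I * (-k) * (Rad zfun ((r, θ), ρ) : ℂ))) -
        ∫ ρ in δ..L, (amp η ((r, θ), ρ) : ℂ) *
          Complex.exp (Complex.I * k * (Rad zfun ((r, θ), ρ) : ℂ))) := by
      rw [← intervalIntegral.integral_sub (hi _) (hi _), ← intervalIntegral.integral_const_mul]
      congr 1
      ext ρ
      have a1 : -(k * (Rad zfun ((r, θ), ρ) : ℂ)) * Complex.I =
          Complex.I * (-k) * (Rad zfun ((r, θ), ρ) : ℂ) := by ring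
      have a2 : k * (Rad zfun ((r, θ), ρ) : ℂ) * Complex.I =
          Complex.I * k * (Rad zfun ((r, θ), ρ) : ℂ) := by ring
      rw [Complex.sin, a1, a2]
      ring
    rw [norm_neg, heq, norm_mul]
    have hI : ‖Complex.I / 2‖ = 1 / 2 := by simp
    rw [hI]
    have := norm_sub_le (∫ ρ in δ..L, (amp η ((r, θ), ρ) : ℂ) *
          Complex.exp (Complex.I * (-k) * (Rad zfun ((r, θ), ρ) : ℂ)))
        (∫ ρ in δ..L, (amp η ((r, θ), ρ) : ℂ) *
          Complex.exp (Complex.I * k * (Rad zfun ((r, θ), ρ) : ℂ)))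
    linarith
  have hfin := norm_setIntegral_le_of_norm_le_const (μ := volume) (s := Set.Ioo (-π) π)
    (by simp) hb
  rw [Real.volume_real_Ioo_of_le (by linarith [Real.pi_pos])] at hfin
  refine hfin.trans (le_of_eq ?_)
  ring

end
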